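/- arXiv:2510.09279 — 2 statements merged into one kernel-verified Lean document; each statement's English description precedes it below -/
import Mathlib

section
/- Let A ∈ B(H) be a (p,k)-quasihyponormal operator on a complex Hilbert space H, and let M be a closed subspace of H invariant under A. Then the restriction of A to M, regarded as a bounded operator on the Hilbert space M, is (p,k)-quasihyponormal. -/
open ContinuousLinearMap Filter

set_option synthInstance.maxHeartbeats 400000

/-- The `p`-th power of an operator (intended for positive operators), via the
continuous functional calculus. -/
noncomputable def opRpow {H : Type*} [NormedAddCommGroup H] [InnerProductSpace ℂ H]
    [CompleteSpace H] (A : H →L[ℂ] H) (p : ℝ) : H →L[ℂ] H :=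
  cfc (fun x : ℝ => x ^ p) A

/-- The logarithm of an operator (intended for positive invertible operators), via the
continuous functional calculus. -/
noncomputable def opLog {H : Type*} [NormedAddCommGroup H] [InnerProductSpace ℂ H]
    [CompleteSpace H] (A : H →L[ℂ] H) : H →L[ℂ] H :=
  cfc Real.log A

/-- `|A| = (A*A)^{1/2}`, via the continuous functional calculus. -/
noncomputable def opAbs {H : Type*} [NormedAddCommGroup H] [InnerProductSpace ℂ H]
    [CompleteSpace H] (A : H →L[ℂ] H) : H →L[ℂ] H :=
  cfc (fun x : ℝ => Real.sqrt x) (adjoint A * A)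

/-- `A` is hyponormal: `A*A ≥ AA*`. -/
def Hyponormal {H : Type*} [NormedAddCommGroup H] [InnerProductSpace ℂ H]
    [CompleteSpace H] (A : H →L[ℂ] H) : Prop :=
  A * adjoint A ≤ adjoint A * A

/-- `A` is `p`-hyponormal: `(A*A)^p ≥ (AA*)^p`. -/
def PHyponormal {H : Type*} [NormedAddCommGroup H] [InnerProductSpace ℂ H]
    [CompleteSpace H] (A : H →L[ℂ] H) (p : ℝ) : Prop :=
  opRpow (A * adjoint A) p ≤ opRpow (adjoint A * A) p

/-- `A` is `(p,k)`-quasihyponormal: `A*^k ((A*A)^p − (AA*)^p) A^k ≥ 0`. -/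
def PKQuasihyponormal {H : Type*} [NormedAddCommGroup H] [InnerProductSpace ℂ H]
    [CompleteSpace H] (A : H →L[ℂ] H) (p : ℝ) (k : ℕ) : Prop :=
  0 ≤ (adjoint A) ^ k * (opRpow (adjoint A * A) p - opRpow (A * adjoint A) p) * A ^ k

/-- `A` is log-hyponormal: `A` invertible and `log(A*A) ≥ log(AA*)`. -/
def LogHyponormal {H : Type*} [NormedAddCommGroup H] [InnerProductSpace ℂ H]
    [CompleteSpace H] (A : H →L[ℂ] H) : Prop :=
  IsUnit A ∧ opLog (A * adjoint A) ≤ opLog (adjoint A * A)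

/-- `A` is a class A operator: `|A²| ≥ |A|²`. -/
def ClassA {H : Type*} [NormedAddCommGroup H] [InnerProductSpace ℂ H]
    [CompleteSpace H] (A : H →L[ℂ] H) : Prop :=
  opAbs A ^ 2 ≤ opAbs (A ^ 2)

/-- `A` is paranormal: `‖Ax‖² ≤ ‖A²x‖ ‖x‖` for all `x`. -/
def Paranormal {H : Type*} [NormedAddCommGroup H] [InnerProductSpace ℂ H]
    (A : H →L[ℂ] H) : Prop :=
  ∀ x : H, ‖A x‖ ^ 2 ≤ ‖A (A x)‖ * ‖x‖

/-- `A` is normaloid: its norm equals its spectral radius. -/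
def Normaloid {H : Type*} [NormedAddCommGroup H] [InnerProductSpace ℂ H]
    (A : H →L[ℂ] H) : Prop :=
  spectralRadius ℂ A = ‖A‖₊

/-- `T` has Bishop's property (β): whenever `(T - z) fₙ(z) → 0` uniformly on compact subsets
of an open set `D ⊆ ℂ`, for analytic `H`-valued functions `fₙ` on `D`, also `fₙ → 0`
uniformly on compact subsets of `D`. -/
def HasBishopBeta {H : Type*} [NormedAddCommGroup H] [InnerProductSpace ℂ H]
    (T : H →L[ℂ] H) : Prop :=
  ∀ D : Set ℂ, IsOpen D → ∀ f : ℕ → ℂ → H,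
    (∀ n, AnalyticOnNhd ℂ (f n) D) →
    (∀ K : Set ℂ, K ⊆ D → IsCompact K →
      TendstoUniformlyOn (fun n z => T (f n z) - z • f n z) 0 atTop K) →
    ∀ K : Set ℂ, K ⊆ D → IsCompact K →
      TendstoUniformlyOn (fun n z => f n z) 0 atTop K

/-- `T` has the single valued extension property: there is no nonzero analytic `H`-valued
function `f` on a nonempty open `D ⊆ ℂ` with `(T - z) f(z) ≡ 0` on `D`. -/
def HasSVEP {H : Type*} [NormedAddCommGroup H] [InnerProductSpace ℂ H]
    (T : H →L[ℂ] H) : Prop :=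
  ∀ D : Set ℂ, IsOpen D → D.Nonempty → ∀ f : ℂ → H,
    AnalyticOnNhd ℂ f D → (∀ z ∈ D, T (f z) - z • f z = 0) →
    ∀ z ∈ D, f z = 0

/-- The restriction of `A` to an invariant subspace `M`, as an operator on `M`. -/
noncomputable def restrictOp {H : Type*} [NormedAddCommGroup H] [InnerProductSpace ℂ H]
    (A : H →L[ℂ] H) (M : Submodule ℂ H) (h : ∀ x ∈ M, A x ∈ M) : M →L[ℂ] M :=
  (A.comp M.subtypeL).codRestrict M (fun x => h x x.2)

/-! An isometry `V` is treated as the inclusion of a subspace: if `A V = V B`, then `B*B` is the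
compression of `A*A` to that subspace, so Hansen's inequality gives `V* (A*A)^p V ≤ (B*B)^p`, while
`V BB* V* ≤ AA*`, so operator monotonicity (Löwner–Heinz) gives `(BB*)^p ≤ V* (AA*)^p V`. Hence
`(B*B)^p − (BB*)^p` dominates the compression of `(A*A)^p − (AA*)^p`, and conjugating by `B^k`,
which satisfies `V B^k = A^k V`, transfers positivity from `A` to `B`. -/

section

open scoped InnerProduct

section RCLike

variable {𝕜 E F H K : Type*} [RCLike 𝕜] [NormedAddCommGroup E] [NormedSpace 𝕜 E]
  [NormedAddCommGroup F] [NormedSpace 𝕜 F]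
  [NormedAddCommGroup H] [InnerProductSpace 𝕜 H] [CompleteSpace H]
  [NormedAddCommGroup K] [InnerProductSpace 𝕜 K] [CompleteSpace K]

lemma adjoint_conj_mono (W : K →L[𝕜] H) {S T : H →L[𝕜] H} (hST : S ≤ T) :
    W† ∘L S ∘L W ≤ W† ∘L T ∘L W := by
  rw [ContinuousLinearMap.le_def, ← comp_sub, ← sub_comp]
  exact IsPositive.adjoint_conj hST W

lemma adjoint_comp_comp_of_isometry {V : K →L[𝕜] H} (hV : Isometry V) (T : E →L[𝕜] K) :
    V† ∘L V ∘L T = T := by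
  rw [← comp_assoc, V.isometry_iff_adjoint_comp_self.1 hV, one_def, id_comp]

lemma isStarProjection_comp_adjoint_of_isometry {V : K →L[𝕜] H} (hV : Isometry V) :
    IsStarProjection (V ∘L V†) where
  isIdempotentElem := by
    rw [IsIdempotentElem, mul_def, comp_assoc, adjoint_comp_comp_of_isometry hV]
  isSelfAdjoint := by
    rw [isSelfAdjoint_iff', adjoint_comp, adjoint_adjoint]

lemma comp_conj_adjoint_comp_of_isometry {V : K →L[𝕜] H} (hV : Isometry V) (T : K →L[𝕜] K) :
    (V ∘L T ∘L V†) ∘L V = V ∘L T := by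
  rw [comp_assoc, comp_assoc, V.isometry_iff_adjoint_comp_self.1 hV, one_def, comp_id]

lemma mul_comp_eq_comp_mul {W : E →L[𝕜] F} {S S' : F →L[𝕜] F} {T T' : E →L[𝕜] E}
    (h : S ∘L W = W ∘L T) (h' : S' ∘L W = W ∘L T') : (S * S') ∘L W = W ∘L (T * T') := by
  rw [mul_def, mul_def, comp_assoc, h', ← comp_assoc, h, comp_assoc]

lemma pow_comp_eq_comp_pow {W : E →L[𝕜] F} {S : F →L[𝕜] F} {T : E →L[𝕜] E}
    (h : S ∘L W = W ∘L T) (k : ℕ) : (S ^ k) ∘L W = W ∘L (T ^ k) := by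
  induction k with
  | zero => rw [pow_zero, pow_zero, one_def, one_def, id_comp, comp_id]
  | succ k ih => rw [pow_succ, pow_succ, mul_comp_eq_comp_mul ih h]

/-- The pairs `(S, T)` such that `W` intertwines both `S` with `T` and `S*` with `T*`. They form a
closed star subalgebra, hence are stable under the continuous functional calculus. -/
def intertwinedPairs (W : K →L[𝕜] H) :
    StarSubalgebra 𝕜 ((H →L[𝕜] H) × (K →L[𝕜] K)) where
  carrier := {P | P.1 ∘L W = W ∘L P.2 ∧ (star P.1) ∘L W = W ∘L (star P.2)}
  mul_mem' := by
    rintro ⟨S, T⟩ ⟨S', T'⟩ ⟨h, h_star⟩ ⟨h', h_star'⟩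
    refine ⟨mul_comp_eq_comp_mul h h', ?_⟩
    simpa only [Prod.mk_mul_mk, star_mul] using mul_comp_eq_comp_mul h_star' h_star
  add_mem' := by
    rintro ⟨S, T⟩ ⟨S', T'⟩ ⟨h, h_star⟩ ⟨h', h_star'⟩
    simp_all only [Set.mem_ofPred_eq, Prod.mk_add_mk, star_add, add_comp, comp_add, and_self]
  algebraMap_mem' r := by
    constructor <;> ext <;> simp [Algebra.algebraMap_eq_smul_one]
  star_mem' := by
    rintro ⟨S, T⟩ ⟨h, h_star⟩
    exact ⟨h_star, by simpa only [Prod.fst_star, Prod.snd_star, star_star] using h⟩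

lemma isClosed_intertwinedPairs (W : K →L[𝕜] H) :
    IsClosed (intertwinedPairs W : Set ((H →L[𝕜] H) × (K →L[𝕜] K))) :=
  (isClosed_eq (by fun_prop) (by fun_prop)).inter (isClosed_eq (by fun_prop) (by fun_prop))

/-- Conjugation by the unitary reflection `2VV* − 1` in the range of an isometry `V`; averaging it
with the identity removes the off-diagonal blocks of an operator. -/
noncomputable def reflectionConj {V : K →L[𝕜] H} (hV : Isometry V) :
    (H →L[𝕜] H) ≃⋆ₐ[𝕜] (H →L[𝕜] H) :=
  Unitary.conjStarAlgAut 𝕜 (H →L[𝕜] H)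
    ⟨2 * (V ∘L V†) - 1,
      (isStarProjection_comp_adjoint_of_isometry hV).two_mul_sub_one_mem_unitary⟩

lemma reflectionConj_apply {V : K →L[𝕜] H} (hV : Isometry V) (T : H →L[𝕜] H) :
    reflectionConj hV T = (2 * (V ∘L V†) - 1) * T * (2 * (V ∘L V†) - 1) := by
  have h_star : star (2 * (V ∘L V†) - 1) = 2 * (V ∘L V†) - 1 := by
    rw [two_mul, star_sub, star_add, star_one,
      (isStarProjection_comp_adjoint_of_isometry hV).isSelfAdjoint.star_eq]
  rw [reflectionConj, Unitary.conjStarAlgAut_apply, h_star]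

end RCLike

variable {H K : Type*} [NormedAddCommGroup H] [InnerProductSpace ℂ H] [CompleteSpace H]
  [NormedAddCommGroup K] [InnerProductSpace ℂ K] [CompleteSpace K]

theorem cfc_comp_eq_comp_cfc {W : K →L[ℂ] H} {S : H →L[ℂ] H} {T : K →L[ℂ] K}
    (hS : IsSelfAdjoint S) (hT : IsSelfAdjoint T) (h : S ∘L W = W ∘L T) {f : ℝ → ℝ}
    (hf : ContinuousOn f (spectrum ℝ S ∪ spectrum ℝ T)) :
    cfc f S ∘L W = W ∘L cfc f T := by
  -- Instance search fails here: the two `ℝ`-algebra structures on the product agree only after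
  -- unfolding.
  have : ContinuousFunctionalCalculus ℝ ((H →L[ℂ] H) × (K →L[ℂ] K)) IsSelfAdjoint :=
    IsSelfAdjoint.instContinuousFunctionalCalculus
  have : IsClosed (intertwinedPairs W : Set ((H →L[ℂ] H) × (K →L[ℂ] K))) :=
    isClosed_intertwinedPairs W
  have hST : IsSelfAdjoint (S, T) := Prod.ext hS hT
  have hmem : (S, T) ∈ intertwinedPairs W := ⟨h, by rwa [hS.star_eq, hT.star_eq]⟩
  have hcfc : cfc f (S, T) ∈ intertwinedPairs W := cfc_mem (𝕜' := ℂ) f hmem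
  rw [cfc_map_prod (S := ℂ) f S T hf hST hS hT] at hcfc
  exact hcfc.1

lemma half_add_half_reflectionConj_comp {V : K →L[ℂ] H} (hV : Isometry V) (T : H →L[ℂ] H) :
    ((1 / 2 : ℝ) • T + (1 / 2 : ℝ) • reflectionConj hV T) ∘L V = V ∘L V† ∘L T ∘L V := by
  have hRV : (2 * (V ∘L V†) - 1) ∘L V = V := by
    rw [two_mul, sub_comp, add_comp, comp_assoc, V.isometry_iff_adjoint_comp_self.1 hV, one_def,
      one_def, comp_id, id_comp, add_sub_cancel_right]
  have hRTV : reflectionConj hV T ∘L V = (2 * (V ∘L V†) - 1) ∘L T ∘L V := by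
    rw [reflectionConj_apply, mul_def, mul_def, comp_assoc, comp_assoc, hRV]
  rw [add_comp, smul_comp, smul_comp, hRTV, two_mul, sub_comp, add_comp, one_def, id_comp,
    comp_assoc]
  module

theorem half_add_half_reflectionConj_cfc_le {f : ℝ → ℝ} (hf_cont : ContinuousOn f (Set.Ici 0))
    (hf : ConcaveOn ℝ (Set.Ici 0) fun T : H →L[ℂ] H ↦ cfc f T)
    {V : K →L[ℂ] H} (hV : Isometry V) {X : H →L[ℂ] H} (hX : 0 ≤ X) :
    (1 / 2 : ℝ) • cfc f X + (1 / 2 : ℝ) • reflectionConj hV (cfc f X) ≤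
      cfc f ((1 / 2 : ℝ) • X + (1 / 2 : ℝ) • reflectionConj hV X) := by
  have hRX : 0 ≤ reflectionConj hV X := map_nonneg _ hX
  rw [StarAlgHomClass.map_cfc (reflectionConj hV) f X
    (hf_cont.mono fun _ hx ↦ spectrum_nonneg_of_nonneg hX hx)]
  exact hf.2 hX hRX (by norm_num) (by norm_num) (by norm_num)

/-- Jensen's operator inequality for compressions: apply concavity to `X` and its conjugate by the
reflection `2VV* − 1`, whose mean is block diagonal with `V* X V` as one of its blocks. -/
theorem adjoint_comp_cfc_comp_le_cfc {f : ℝ → ℝ} (hf_cont : ContinuousOn f (Set.Ici 0))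
    (hf : ConcaveOn ℝ (Set.Ici 0) fun T : H →L[ℂ] H ↦ cfc f T)
    {V : K →L[ℂ] H} (hV : Isometry V) {X : H →L[ℂ] H} (hX : 0 ≤ X) :
    V† ∘L cfc f X ∘L V ≤ cfc f (V† ∘L X ∘L V) := by
  set Y : H →L[ℂ] H := (1 / 2 : ℝ) • X + (1 / 2 : ℝ) • reflectionConj hV X
  have hY : 0 ≤ Y := add_nonneg (smul_nonneg (by norm_num) hX)
    (smul_nonneg (by norm_num) (map_nonneg _ hX))
  have hZ : 0 ≤ V† ∘L X ∘L V := by simpa using adjoint_conj_mono V hX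
  have hYV : cfc f Y ∘L V = V ∘L cfc f (V† ∘L X ∘L V) :=
    cfc_comp_eq_comp_cfc (.of_nonneg hY) (.of_nonneg hZ) (half_add_half_reflectionConj_comp hV X)
      (hf_cont.mono (Set.union_subset (fun _ hx ↦ spectrum_nonneg_of_nonneg hY hx)
        fun _ hx ↦ spectrum_nonneg_of_nonneg hZ hx))
  calc
    V† ∘L cfc f X ∘L V
      = V† ∘L ((1 / 2 : ℝ) • cfc f X + (1 / 2 : ℝ) • reflectionConj hV (cfc f X)) ∘L V := by
        rw [half_add_half_reflectionConj_comp, adjoint_comp_comp_of_isometry hV]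
    _ ≤ V† ∘L cfc f Y ∘L V :=
        adjoint_conj_mono V (half_add_half_reflectionConj_cfc_le hf_cont hf hV hX)
    _ = cfc f (V† ∘L X ∘L V) := by rw [hYV, adjoint_comp_comp_of_isometry hV]

lemma opRpow_eq_rpow {T : H →L[ℂ] H} (hT : 0 ≤ T) (p : ℝ) : opRpow T p = T ^ p :=
  (CFC.rpow_eq_cfc_real hT).symm

theorem concaveOn_opRpow {p : ℝ} (hp : p ∈ Set.Icc 0 1) :
    ConcaveOn ℝ (Set.Ici 0) fun T : H →L[ℂ] H ↦ opRpow T p :=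
  (CFC.concaveOn_rpow hp).congr fun _ hT ↦ (opRpow_eq_rpow hT p).symm

theorem opRpow_le_opRpow {p : ℝ} (hp : p ∈ Set.Icc 0 1) {S T : H →L[ℂ] H} (hS : 0 ≤ S)
    (hST : S ≤ T) : opRpow S p ≤ opRpow T p := by
  rw [opRpow_eq_rpow hS, opRpow_eq_rpow (hS.trans hST)]
  exact CFC.rpow_le_rpow hp hST

theorem adjoint_comp_opRpow_adjoint_mul_self_comp_le {p : ℝ} (hp : p ∈ Set.Icc 0 1)
    {V : K →L[ℂ] H} (hV : Isometry V) {A : H →L[ℂ] H} {B : K →L[ℂ] K}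
    (hAB : A ∘L V = V ∘L B) :
    V† ∘L opRpow (A† * A) p ∘L V ≤ opRpow (B† * B) p := by
  have h_compress : V† ∘L (A† * A) ∘L V = B† * B := by
    have hAB_adj : V† ∘L A† = B† ∘L V† := by rw [← adjoint_comp, hAB, adjoint_comp]
    rw [mul_def, comp_assoc, hAB, ← comp_assoc, hAB_adj, comp_assoc,
      adjoint_comp_comp_of_isometry hV, mul_def]
  rw [← h_compress]
  exact adjoint_comp_cfc_comp_le_cfc (Real.continuous_rpow_const hp.1).continuousOn
    (concaveOn_opRpow hp) hV (star_mul_self_nonneg A)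

lemma conj_mul_adjoint_le_mul_adjoint {V : K →L[ℂ] H} (hV : Isometry V) {A : H →L[ℂ] H}
    {B : K →L[ℂ] K} (hAB : A ∘L V = V ∘L B) :
    V ∘L (B * B†) ∘L V† ≤ A * A† :=
  calc
    V ∘L (B * B†) ∘L V† = (V ∘L B) ∘L (V ∘L B)† := by
      rw [adjoint_comp, mul_def, comp_assoc, comp_assoc]
    _ = A * (V ∘L V†) * star A := by
      rw [← hAB, adjoint_comp, mul_def, mul_def, star_eq_adjoint, comp_assoc, comp_assoc,
        comp_assoc]
    _ ≤ A * 1 * star A :=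
      star_right_conjugate_le_conjugate (isStarProjection_comp_adjoint_of_isometry hV).le_one A
    _ = A * A† := by rw [mul_one, star_eq_adjoint]

theorem opRpow_mul_adjoint_self_le_adjoint_comp {p : ℝ} (hp : p ∈ Set.Icc 0 1)
    {V : K →L[ℂ] H} (hV : Isometry V) {A : H →L[ℂ] H} {B : K →L[ℂ] K}
    (hAB : A ∘L V = V ∘L B) :
    opRpow (B * B†) p ≤ V† ∘L opRpow (A * A†) p ∘L V := by
  have hBB : 0 ≤ B * B† := mul_star_self_nonneg B
  have hY : 0 ≤ V ∘L (B * B†) ∘L V† := by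
    simpa using adjoint_conj_mono (V†) hBB
  have hYV : opRpow (V ∘L (B * B†) ∘L V†) p ∘L V = V ∘L opRpow (B * B†) p :=
    cfc_comp_eq_comp_cfc (.of_nonneg hY) (.of_nonneg hBB)
      (comp_conj_adjoint_comp_of_isometry hV _) (Real.continuous_rpow_const hp.1).continuousOn
  calc
    opRpow (B * B†) p = V† ∘L opRpow (V ∘L (B * B†) ∘L V†) p ∘L V := by
      rw [hYV, adjoint_comp_comp_of_isometry hV]
    _ ≤ V† ∘L opRpow (A * A†) p ∘L V :=
      adjoint_conj_mono V (opRpow_le_opRpow hp hY (conj_mul_adjoint_le_mul_adjoint hV hAB))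

theorem pkQuasihyponormal_restrict_general {p : ℝ} (hp : p ∈ Set.Icc 0 1) {k : ℕ}
    {V : K →L[ℂ] H} (hV : Isometry V) {A : H →L[ℂ] H} {B : K →L[ℂ] K}
    (hAB : A ∘L V = V ∘L B) (hA : PKQuasihyponormal A p k) : PKQuasihyponormal B p k := by
  set D : H →L[ℂ] H := opRpow (A† * A) p - opRpow (A * A†) p
  have hD : V† ∘L D ∘L V ≤ opRpow (B† * B) p - opRpow (B * B†) p := by
    simpa only [D, sub_comp, comp_sub] using
      sub_le_sub (adjoint_comp_opRpow_adjoint_mul_self_comp_le hp hV hAB)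
        (opRpow_mul_adjoint_self_le_adjoint_comp hp hV hAB)
  have hAk : (A ^ k) ∘L V = V ∘L (B ^ k) := pow_comp_eq_comp_pow hAB k
  have hAk_adj : V† ∘L ((A†) ^ k) = ((B†) ^ k) ∘L V† := by
    simpa only [adjoint_comp, ← star_eq_adjoint, star_pow] using congrArg adjoint hAk
  calc
    0 ≤ V† ∘L ((A†) ^ k * D * A ^ k) ∘L V := by simpa using adjoint_conj_mono V hA
    _ = (B†) ^ k * (V† ∘L D ∘L V) * B ^ k := by
      simp only [mul_def, comp_assoc, hAk]
      simp only [← comp_assoc, hAk_adj]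
    _ ≤ (B†) ^ k * (opRpow (B† * B) p - opRpow (B * B†) p) * B ^ k := by
      simpa only [star_pow, star_eq_adjoint] using star_left_conjugate_le_conjugate hD (B ^ k)

end

theorem pkQuasihyponormal_restrict {H : Type*} [NormedAddCommGroup H]
    [InnerProductSpace ℂ H] [CompleteSpace H]
    (A : H →L[ℂ] H) (p : ℝ) (hp0 : 0 < p) (hp1 : p ≤ 1) (k : ℕ) (hk : 0 < k)
    (hA : PKQuasihyponormal A p k)
    (M : Submodule ℂ H) (hMc : IsClosed (M : Set H)) (hInv : ∀ x ∈ M, A x ∈ M) :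
    haveI : CompleteSpace M := hMc.completeSpace_coe
    PKQuasihyponormal (restrictOp A M hInv) p k := by
  have : CompleteSpace M := hMc.completeSpace_coe
  exact pkQuasihyponormal_restrict_general ⟨hp0.le, hp1⟩ M.subtypeₗᵢ.isometry
    (V := M.subtypeL) (B := restrictOp A M hInv) rfl hA
end

section
/- Every log-hyponormal operator A ∈ B(H) on a complex Hilbert space H is a class A operator. -/
open ContinuousLinearMap Filter

set_option synthInstance.maxHeartbeats 400000

/-! Put `y = a a*`, `x = a* a`, and let `g = y⁻¹ ♯ x` be the geometric mean, i.e. the nonnegative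
solution of `g y g = x`. Then `(a* g a)² = a* (g y g) a = (a²)* a²`, so `|a²| = a* g a`, and it
suffices to show `1 ≤ g`, which gives `|a|² = a* a ≤ a* g a`.

If `y ≤ x`, then `1 = y⁻¹ ♯ y ≤ g` by monotonicity of the mean. If only `log y ≤ log x`, replace `x`
by `c x` with `c > 1` to make the inequality strict. Since `(tᵖ - 1) / p → log t` as `p → 0⁺`, there
is then some `p = 2⁻ᵏ` with `yᵖ ≤ (c x)ᵖ`, hence `1 ≤ (yᵖ)⁻¹ ♯ (c x)ᵖ`. The Ando–Hiai inequality
(`1 ≤ a ♯ b` implies `1 ≤ a² ♯ b²`), applied `k` times, turns this into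
`1 ≤ y⁻¹ ♯ (c x) = √c g`; let `c → 1`. -/

section CStarAlgebra

open CFC Ring Set Topology

variable {𝒜 : Type*} [CStarAlgebra 𝒜] [PartialOrder 𝒜] [StarOrderedRing 𝒜]

/-- The geometric mean `a ♯ b = a^{1/2} (a^{-1/2} b a^{-1/2})^{1/2} a^{1/2}` of Pusz–Woronowicz and
Kubo–Ando. It is meant for strictly positive `a` and nonnegative `b`, where it is the unique
nonnegative solution `g` of the Riccati equation `g a⁻¹ g = b`. -/
noncomputable def geomMean (a b : 𝒜) : 𝒜 :=
  conjSqrt a (sqrt (conjSqrt a⁻¹ʳ b))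

local infixl:70 "♯" => geomMean

variable {a a' b b' g x y : 𝒜}

lemma geomMean_nonneg (a b : 𝒜) : 0 ≤ a ♯ b :=
  conjugate_nonneg_of_nonneg (sqrt_nonneg _) (sqrt_nonneg a)

lemma conjSqrt_mul_mul_self (ha : 0 ≤ a) (g : 𝒜) :
    conjSqrt a (g * a * g) = conjSqrt a g * conjSqrt a g := by
  nth_rw 2 [← sqrt_mul_sqrt_self a]
  simp only [conjSqrt_apply, mul_assoc]

lemma conjSqrt_injective (ha : IsStrictlyPositive a) : Function.Injective (conjSqrt a) :=
  Function.LeftInverse.injective (conjSqrt_ringInverse_conjSqrt a · ha)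

lemma geomMean_eq_iff (ha : IsStrictlyPositive a) (hb : 0 ≤ b) (hg : 0 ≤ g) :
    a ♯ b = g ↔ g * a⁻¹ʳ * g = b := by
  have ha' := ha.ringInverse
  have conj_nonneg {c : 𝒜} (hc : 0 ≤ c) : 0 ≤ conjSqrt a⁻¹ʳ c :=
    conjugate_nonneg_of_nonneg hc (sqrt_nonneg _)
  calc a ♯ b = g ↔ sqrt (conjSqrt a⁻¹ʳ b) = conjSqrt a⁻¹ʳ g := by
        rw [← (conjSqrt_injective ha).eq_iff (b := conjSqrt a⁻¹ʳ g),
          conjSqrt_conjSqrt_ringInverse a g, geomMean]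
    _ ↔ conjSqrt a⁻¹ʳ (g * a⁻¹ʳ * g) = conjSqrt a⁻¹ʳ b := by
        rw [sqrt_eq_iff _ _ (conj_nonneg hb) (conj_nonneg hg),
          conjSqrt_mul_mul_self ha'.nonneg]
    _ ↔ g * a⁻¹ʳ * g = b := (conjSqrt_injective ha').eq_iff

lemma geomMean_mul_ringInverse_mul_geomMean (ha : IsStrictlyPositive a) (hb : 0 ≤ b) :
    a ♯ b * a⁻¹ʳ * (a ♯ b) = b :=
  (geomMean_eq_iff ha hb (geomMean_nonneg a b)).1 rfl

lemma isStrictlyPositive_geomMean (ha : IsStrictlyPositive a) (hb : IsStrictlyPositive b) :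
    IsStrictlyPositive (a ♯ b) := by
  have := (isStrictlyPositive_conjSqrt_iff _ b ha.ringInverse).2 hb
  exact (isStrictlyPositive_conjSqrt_iff a _ ha).2 this.sqrt

lemma geomMean_comm (ha : IsStrictlyPositive a) (hb : IsStrictlyPositive b) :
    a ♯ b = b ♯ a := by
  have hg := isStrictlyPositive_geomMean ha hb
  have riccati := geomMean_mul_ringInverse_mul_geomMean ha hb.nonneg
  symm
  rw [geomMean_eq_iff hb ha.nonneg hg.nonneg]
  set g := a ♯ b
  have hbinv : b⁻¹ʳ = g⁻¹ʳ * a * g⁻¹ʳ := by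
    rw [← riccati, inverse_mul (.inr hg.isUnit), inverse_mul (.inl hg.isUnit),
      inverse_inverse ha.isUnit, mul_assoc]
  rw [hbinv, mul_assoc, inverse_mul_cancel_right _ _ hg.isUnit,
    mul_inverse_cancel_left _ _ hg.isUnit]

lemma geomMean_le_geomMean_left (h : b ≤ b') (a : 𝒜) : a ♯ b ≤ a ♯ b' :=
  conjSqrt_le_conjSqrt (sqrt_le_sqrt _ _ (conjSqrt_le_conjSqrt h))

lemma geomMean_le_geomMean (ha : IsStrictlyPositive a) (hb : IsStrictlyPositive b)
    (haa' : a ≤ a') (hbb' : b ≤ b') : a ♯ b ≤ a' ♯ b' := by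
  have ha' := ha.of_le haa'
  calc a ♯ b = b ♯ a := geomMean_comm ha hb
    _ ≤ b ♯ a' := geomMean_le_geomMean_left haa' b
    _ = a' ♯ b := geomMean_comm hb ha'
    _ ≤ a' ♯ b' := geomMean_le_geomMean_left hbb' a'

lemma geomMean_smul_right (ha : IsStrictlyPositive a) (hb : 0 ≤ b) {c : ℝ} (hc : 0 ≤ c) :
    a ♯ (c • b) = √c • (a ♯ b) := by
  rw [geomMean_eq_iff ha (smul_nonneg hc hb) (smul_nonneg c.sqrt_nonneg (geomMean_nonneg a b)),
    smul_mul_assoc, smul_mul_smul_comm, geomMean_mul_ringInverse_mul_geomMean ha hb,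
    Real.mul_self_sqrt hc]

lemma one_le_ringInverse_geomMean_of_le (hy : IsStrictlyPositive y) (h : y ≤ x) :
    1 ≤ y⁻¹ʳ ♯ x := by
  have : y⁻¹ʳ ♯ y = 1 := by
    rw [geomMean_eq_iff hy.ringInverse hy.nonneg zero_le_one, inverse_inverse hy.isUnit, one_mul,
      mul_one]
  exact this.ge.trans (geomMean_le_geomMean_left h _)

lemma mul_ringInverse_mul_le_sq (ha : 0 ≤ a) (hg : 1 ≤ g) : a * g⁻¹ʳ * a ≤ a ^ 2 := by
  have hginv : g⁻¹ʳ ≤ 1 := by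
    simpa using CStarAlgebra.ringInverse_le_ringInverse hg isStrictlyPositive_one
  simpa [sq] using conjugate_le_conjugate_of_nonneg hginv ha

lemma geomMean_mul_ringInverse_geomMean_mul (ha : IsStrictlyPositive a)
    (hb : IsStrictlyPositive b) :
    (a * (a ♯ b)⁻¹ʳ * a) ♯ (b * (a ♯ b)⁻¹ʳ * b) = a ♯ b := by
  have hg := isStrictlyPositive_geomMean ha hb
  have riccati := geomMean_mul_ringInverse_mul_geomMean ha hb.nonneg
  set g := a ♯ b
  have ha' : IsStrictlyPositive (a * g⁻¹ʳ * a) :=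
    .conjugate_of_isUnit_of_isSelfAdjoint _ a ha.isUnit ha.isSelfAdjoint hg.ringInverse
  rw [geomMean_eq_iff ha' (conjugate_nonneg_of_nonneg hg.ringInverse.nonneg hb.nonneg) hg.nonneg]
  have hinv : (a * g⁻¹ʳ * a)⁻¹ʳ = a⁻¹ʳ * g * a⁻¹ʳ := by
    rw [inverse_mul (.inr ha.isUnit), inverse_mul (.inl ha.isUnit), inverse_inverse hg.isUnit,
      mul_assoc]
  calc g * (a * g⁻¹ʳ * a)⁻¹ʳ * g = g * a⁻¹ʳ * g * a⁻¹ʳ * g := by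
        rw [hinv]; noncomm_ring
    _ = g * a⁻¹ʳ * g * g⁻¹ʳ * (g * a⁻¹ʳ * g) := by
        rw [mul_inverse_cancel_right _ _ hg.isUnit]; noncomm_ring
    _ = b * g⁻¹ʳ * b := by rw [riccati]

-- The Ando–Hiai inequality for the exponent 2: the mean drops back to `g = a ♯ b` itself when the
-- squares are shrunk to `a g⁻¹ a` and `b g⁻¹ b`.
lemma geomMean_le_geomMean_sq (ha : IsStrictlyPositive a) (hb : IsStrictlyPositive b)
    (h : 1 ≤ a ♯ b) : a ♯ b ≤ a ^ 2 ♯ b ^ 2 := by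
  have hg := (isStrictlyPositive_geomMean ha hb).ringInverse
  calc a ♯ b = (a * (a ♯ b)⁻¹ʳ * a) ♯ (b * (a ♯ b)⁻¹ʳ * b) :=
        (geomMean_mul_ringInverse_geomMean_mul ha hb).symm
    _ ≤ a ^ 2 ♯ b ^ 2 := geomMean_le_geomMean
        (.conjugate_of_isUnit_of_isSelfAdjoint _ a ha.isUnit ha.isSelfAdjoint hg)
        (.conjugate_of_isUnit_of_isSelfAdjoint _ b hb.isUnit hb.isSelfAdjoint hg)
        (mul_ringInverse_mul_le_sq ha.nonneg h) (mul_ringInverse_mul_le_sq hb.nonneg h)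

lemma isStrictlyPositive_pow (ha : IsStrictlyPositive a) (n : ℕ) : IsStrictlyPositive (a ^ n) :=
  (ha.isUnit.pow n).isStrictlyPositive (CStarAlgebra.pow_nonneg ha.nonneg n)

lemma one_le_geomMean_pow_two_pow (ha : IsStrictlyPositive a) (hb : IsStrictlyPositive b)
    (h : 1 ≤ a ♯ b) (k : ℕ) : 1 ≤ a ^ 2 ^ k ♯ b ^ 2 ^ k := by
  induction k with
  | zero => simpa using h
  | succ k ih =>
    simp only [pow_succ 2 k, pow_mul]
    exact ih.trans (geomMean_le_geomMean_sq (isStrictlyPositive_pow ha _)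
      (isStrictlyPositive_pow hb _) ih)

lemma eventually_nonneg_of_tendsto {ι : Type*} {l : Filter ι} {f : ι → 𝒜} {ε : ℝ}
    (hf : ∀ i, IsSelfAdjoint (f i)) (hlim : Tendsto f l (𝓝 b)) (hε : 0 < ε)
    (hb : algebraMap ℝ 𝒜 ε ≤ b) : ∀ᶠ i in l, 0 ≤ f i := by
  have hbsa : IsSelfAdjoint b := .of_nonneg ((algebraMap_nonneg 𝒜 hε.le).trans hb)
  filter_upwards [Metric.tendsto_nhds.1 hlim ε hε] with i hi
  have hclose : b - f i ≤ algebraMap ℝ 𝒜 ε := by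
    refine (hbsa.sub (hf i)).le_algebraMap_norm_self.trans (algebraMap_mono 𝒜 ?_)
    rw [← dist_eq_norm']
    exact hi.le
  simpa using hclose.trans hb

lemma cfc_inv_mul_rpow_sub_one (hx : IsStrictlyPositive x) (p : ℝ) :
    cfc (fun t : ℝ => p⁻¹ * (t ^ p - 1)) x = p⁻¹ • (x ^ p - 1) := by
  simp only [← smul_eq_mul]
  rw [cfc_smul _ (hf := by fun_prop (disch := grind)),
    cfc_sub _ _ (hf := by fun_prop (disch := grind)), cfc_const_one .., rpow_eq_cfc_real ..]

lemma eventually_rpow_le_rpow_of_log_add_le_log (hx : IsStrictlyPositive x)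
    (hy : IsStrictlyPositive y) {ε : ℝ} (hε : 0 < ε)
    (h : algebraMap ℝ 𝒜 ε + log y ≤ log x) : ∀ᶠ p : ℝ in 𝓝[>] 0, y ^ p ≤ x ^ p := by
  have hnonneg := eventually_nonneg_of_tendsto
    (fun p : ℝ => (cfc_predicate (fun t : ℝ => p⁻¹ * (t ^ p - 1)) x).sub (cfc_predicate _ y))
    ((tendsto_cfc_rpow_sub_one_log hx).sub (tendsto_cfc_rpow_sub_one_log hy)) hε
    (le_sub_iff_add_le.2 h)
  filter_upwards [hnonneg, self_mem_nhdsWithin] with p hp (hp0 : 0 < p)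
  rw [cfc_inv_mul_rpow_sub_one hx, cfc_inv_mul_rpow_sub_one hy, ← smul_sub,
    sub_sub_sub_cancel_right] at hp
  exact sub_nonneg.1 ((smul_nonneg_iff_nonneg_of_pos_left (inv_pos.2 hp0)).1 hp)

lemma rpow_inv_natCast_pow (hx : IsStrictlyPositive x) {n : ℕ} (hn : n ≠ 0) :
    (x ^ (n : ℝ)⁻¹) ^ n = x := by
  rw [← rpow_natCast _ _ rpow_nonneg]
  exact rpow_inv_rpow x _ (Nat.cast_ne_zero.2 hn) hx

lemma one_le_ringInverse_geomMean_of_log_add_le_log (hx : IsStrictlyPositive x)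
    (hy : IsStrictlyPositive y) {ε : ℝ} (hε : 0 < ε) (h : algebraMap ℝ 𝒜 ε + log y ≤ log x) :
    1 ≤ y⁻¹ʳ ♯ x := by
  have hlim : Tendsto (fun k : ℕ => ((2 ^ k : ℕ) : ℝ)⁻¹) atTop (𝓝[>] 0) :=
    tendsto_inv_atTop_nhdsGT_zero.comp
      (tendsto_natCast_atTop_atTop.comp (tendsto_pow_atTop_atTop_of_one_lt one_lt_two))
  obtain ⟨k, hk⟩ := (hlim.eventually (eventually_rpow_le_rpow_of_log_add_le_log hx hy hε h)).exists
  have hxk := hx.rpow x ((2 ^ k : ℕ) : ℝ)⁻¹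
  have hyk := hy.rpow y ((2 ^ k : ℕ) : ℝ)⁻¹
  have hroot := one_le_ringInverse_geomMean_of_le hyk hk
  simpa only [inverse_pow, rpow_inv_natCast_pow hx (pow_ne_zero k two_ne_zero),
    rpow_inv_natCast_pow hy (pow_ne_zero k two_ne_zero)] using
    one_le_geomMean_pow_two_pow hyk.ringInverse hxk hroot k

lemma one_le_ringInverse_geomMean_of_log_le_log (hx : IsStrictlyPositive x)
    (hy : IsStrictlyPositive y) (h : log y ≤ log x) : 1 ≤ y⁻¹ʳ ♯ x := by
  have hscaled : ∀ c : ℝ, 1 < c → 1 ≤ √c • (y⁻¹ʳ ♯ x) := fun c hc => by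
    have hc0 : 0 < c := one_pos.trans hc
    rw [← geomMean_smul_right hy.ringInverse hx.nonneg hc0.le]
    refine one_le_ringInverse_geomMean_of_log_add_le_log (hx.smul hc0) hy (Real.log_pos hc) ?_
    rw [log_smul' x hc0]
    gcongr
  have hlim : Tendsto (fun c : ℝ => √c • (y⁻¹ʳ ♯ x)) (𝓝[>] 1) (𝓝 (y⁻¹ʳ ♯ x)) := by
    have hcont : Continuous fun c : ℝ => √c • (y⁻¹ʳ ♯ x) := by fun_prop
    simpa using (hcont.tendsto 1).mono_left nhdsWithin_le_nhds
  exact ge_of_tendsto hlim (eventually_nhdsWithin_of_forall hscaled)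

lemma isStrictlyPositive_star_mul_self (ha : IsUnit a) : IsStrictlyPositive (star a * a) :=
  (ha.star.mul ha).isStrictlyPositive (star_mul_self_nonneg a)

lemma isStrictlyPositive_mul_star_self (ha : IsUnit a) : IsStrictlyPositive (a * star a) :=
  (ha.mul ha.star).isStrictlyPositive (mul_star_self_nonneg a)

lemma abs_sq_eq_star_mul_geomMean_mul (ha : IsUnit a) :
    CFC.abs (a ^ 2) = star a * ((a * star a)⁻¹ʳ ♯ (star a * a)) * a := by
  have hy := isStrictlyPositive_mul_star_self ha
  have riccati := geomMean_mul_ringInverse_mul_geomMean hy.ringInverse (star_mul_self_nonneg a)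
  have hg := geomMean_nonneg (a * star a)⁻¹ʳ (star a * a)
  rw [inverse_inverse hy.isUnit] at riccati
  set g := (a * star a)⁻¹ʳ ♯ (star a * a)
  refine sqrt_unique ?_ (star_left_conjugate_nonneg hg a)
  calc star a * g * a * (star a * g * a) = star a * (g * (a * star a) * g) * a := by noncomm_ring
    _ = star (a ^ 2) * a ^ 2 := by rw [riccati, star_pow]; noncomm_ring

theorem logHyponormal_classA_general (ha : IsUnit a)
    (h : log (a * star a) ≤ log (star a * a)) : CFC.abs a ^ 2 ≤ CFC.abs (a ^ 2) := by
  have hx := isStrictlyPositive_star_mul_self ha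
  have hy := isStrictlyPositive_mul_star_self ha
  calc CFC.abs a ^ 2 = star a * 1 * a := by rw [CFC.abs_sq, mul_one]
    _ ≤ star a * ((a * star a)⁻¹ʳ ♯ (star a * a)) * a :=
        star_left_conjugate_le_conjugate (one_le_ringInverse_geomMean_of_log_le_log hx hy h) a
    _ = CFC.abs (a ^ 2) := (abs_sq_eq_star_mul_geomMean_mul ha).symm

end CStarAlgebra

lemma opAbs_eq_abs {H : Type*} [NormedAddCommGroup H] [InnerProductSpace ℂ H] [CompleteSpace H]
    (A : H →L[ℂ] H) : opAbs A = CFC.abs A := by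
  rw [CFC.abs, CFC.sqrt_eq_real_sqrt _ (star_mul_self_nonneg A), cfcₙ_eq_cfc]
  rfl

theorem logHyponormal_classA {H : Type*} [NormedAddCommGroup H]
    [InnerProductSpace ℂ H] [CompleteSpace H]
    (A : H →L[ℂ] H) (hA : LogHyponormal A) : ClassA A := by
  simpa only [ClassA, opAbs_eq_abs] using logHyponormal_classA_general hA.1 hA.2
end
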